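/- For the convex-aggregation procedure described in the context, with Ψ a (0,p)-good set with respect to G_{Λ_ε}, the selected estimator F̂ = F_λ̂ satisfies E‖F̂ − f‖_p ≤ (2·max_{ψ∈Ψ} ‖ψ‖_q + 1)·min_{λ∈Λ} ‖f − F_λ‖_p + 2κε·max_{ψ∈Ψ} ‖ψ‖_2 + 2Lε·(1 + max_{ψ∈Ψ} ‖ψ‖_q) + 2Lδ. -/

import Mathlib

open MeasureTheory
open scoped ENNReal

/-- Lebesgue measure restricted to the unit cube `[0,1]^d`. -/
noncomputable def cubeMeasure (d : ℕ) : Measure (Fin d → ℝ) :=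
  volume.restrict (Set.Icc 0 1)

/-- The real-valued `L^r` norm on the unit cube. -/
noncomputable def Lnorm {d : ℕ} (r : ℝ≥0∞) (g : (Fin d → ℝ) → ℝ) : ℝ :=
  (eLpNorm g r (cubeMeasure d)).toReal

/-- The simplex `Λ = {λ : λ_i ≥ 0, Σ λ_i ≤ 1}` in `ℝ^N`. -/
def simplex (N : ℕ) : Set (Fin N → ℝ) :=
  {l | (∀ i, 0 ≤ l i) ∧ ∑ i, l i ≤ 1}

lemma aux_int {d : ℕ} {a b c e : (Fin d → ℝ) → ℝ} (ha : Integrable a (cubeMeasure d))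
    (hb : Integrable b (cubeMeasure d)) (hc : Integrable c (cubeMeasure d))
    (he : Integrable e (cubeMeasure d)) :
    ∫ t, (a t + b t - c t - e t) ∂(cubeMeasure d) =
      (∫ t, a t ∂(cubeMeasure d)) + (∫ t, b t ∂(cubeMeasure d)) - (∫ t, c t ∂(cubeMeasure d))
        - (∫ t, e t ∂(cubeMeasure d)) := by
  have hab : Integrable (fun t => a t + b t) (cubeMeasure d) := ha.add hb
  have habc : Integrable (fun t => a t + b t - c t) (cubeMeasure d) := hab.sub hc
  rw [integral_sub habc he, integral_sub hab hc, integral_add ha hb]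

lemma aux_holder {d : ℕ} {p q : ℝ≥0∞} (hpq : 1 / p + 1 / q = 1)
    {g h : (Fin d → ℝ) → ℝ} (hg : MemLp g q (cubeMeasure d)) (hh : MemLp h p (cubeMeasure d)) :
    Integrable (fun t => g t * h t) (cubeMeasure d) ∧
    |∫ t, g t * h t ∂(cubeMeasure d)| ≤ Lnorm q g * Lnorm p h := by
  have : ENNReal.HolderTriple q p 1 := ⟨by
    simp only [one_div] at hpq
    rw [add_comm, hpq, inv_one]⟩
  have hm : MemLp (fun t => g t * h t) 1 (cubeMeasure d) := hh.mul hg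
  refine ⟨memLp_one_iff_integrable.1 hm, ?_⟩
  have h1 := eLpNorm_smul_le_mul_eLpNorm (p := q) (q := p) (r := 1) hh.1 hg.1
  have h2 : eLpNorm (fun t => g t * h t) 1 (cubeMeasure d) ≤
    eLpNorm g q (cubeMeasure d) * eLpNorm h p (cubeMeasure d) := h1
  have h3 := norm_integral_le_lintegral_norm (μ := cubeMeasure d) (fun t => g t * h t)
  rw [Real.norm_eq_abs] at h3
  refine h3.trans ?_
  unfold Lnorm
  rw [← ENNReal.toReal_mul]
  refine ENNReal.toReal_mono (ENNReal.mul_ne_top hg.2.ne hh.2.ne) ?_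
  rw [eLpNorm_one_eq_lintegral_enorm] at h2
  simpa only [ofReal_norm] using h2

lemma aux_tri {d : ℕ} {p : ℝ≥0∞} (hp : 1 ≤ p)
    {a b c : (Fin d → ℝ) → ℝ} (ha : MemLp a p (cubeMeasure d)) (hb : MemLp b p (cubeMeasure d))
    (hc : MemLp c p (cubeMeasure d)) :
    Lnorm p (fun t => a t - c t) ≤ Lnorm p (fun t => a t - b t) + Lnorm p (fun t => b t - c t) := by
  unfold Lnorm
  have h1 : MemLp (fun t => a t - b t) p (cubeMeasure d) := ha.sub hb
  have h2 : MemLp (fun t => b t - c t) p (cubeMeasure d) := hb.sub hc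
  rw [← ENNReal.toReal_add h1.2.ne h2.2.ne]
  refine ENNReal.toReal_mono (ENNReal.add_ne_top.2 ⟨h1.2.ne, h2.2.ne⟩) ?_
  have := eLpNorm_add_le h1.1 h2.1 hp
  convert this using 2
  ext t
  simp

lemma aux_lin {d N : ℕ} {p : ℝ≥0∞} (hp : 1 ≤ p) (F : Fin N → (Fin d → ℝ) → ℝ)
    (hF : ∀ i, MemLp (F i) p (cubeMeasure d)) (L : ℝ) (hL0 : 0 ≤ L)
    (hFLb : ∀ i, eLpNorm (F i) p (cubeMeasure d) ≤ ENNReal.ofReal L) (c : Fin N → ℝ) :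
    Lnorm p (fun t => ∑ i, c i * F i t) ≤ L * ∑ i, |c i| := by
  unfold Lnorm
  refine ENNReal.toReal_le_of_le_ofReal (mul_nonneg hL0 (Finset.sum_nonneg fun i _ => abs_nonneg _)) ?_
  have h1 := eLpNorm_sum_le (s := Finset.univ) (f := fun i => c i • F i) (p := p)
    (μ := cubeMeasure d) (fun i _ => ((hF i).const_smul (c i)).1) hp
  have h2 : (∑ i, c i • F i) = fun t => ∑ i, c i * F i t := by
    ext t; simp
  rw [h2] at h1
  refine h1.trans ?_
  rw [Finset.mul_sum, ENNReal.ofReal_sum_of_nonneg (fun i _ => mul_nonneg hL0 (abs_nonneg _))]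
  refine Finset.sum_le_sum fun i _ => ?_
  rw [eLpNorm_const_smul, mul_comm L, ENNReal.ofReal_mul (abs_nonneg _), ← Real.enorm_eq_ofReal_abs]
  gcongr
  exact hFLb i

/-- Theorem 5 of the paper: oracle inequality for the convex
aggregation procedure based on a `(0,p)`-good probe set with respect to `G_{Λ_ε}`. -/
theorem stmt_12
    {d N : ℕ} (hd : 1 ≤ d) (hN : 1 ≤ N)
    (p q : ℝ≥0∞) (hp : 1 ≤ p) (hpq : 1 / p + 1 / q = 1)
    (f : (Fin d → ℝ) → ℝ) (F : Fin N → (Fin d → ℝ) → ℝ)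
    (FL : (Fin N → ℝ) → (Fin d → ℝ) → ℝ)
    (hFL : ∀ lam t, FL lam t = ∑ i, lam i * F i t)
    (hfm : Measurable f) (hFm : ∀ i, Measurable (F i))
    (L : ℝ) (hL0 : 0 ≤ L)
    (hfL : eLpNorm f p (cubeMeasure d) ≤ ENNReal.ofReal L)
    (hFLb : ∀ i, eLpNorm (F i) p (cubeMeasure d) ≤ ENNReal.ofReal L)
    (ε : ℝ) (hε0 : 0 < ε) (hε1 : ε < 1)
    -- the finite `ε`-net `Λ_ε` of the simplex in `ℓ¹`-norm
    (Λε : Finset (Fin N → ℝ))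
    (hΛsub : ∀ lam ∈ Λε, lam ∈ simplex N)
    (hnet : ∀ lam ∈ simplex N, ∃ lam' ∈ Λε, ∑ i, |lam i - lam' i| ≤ ε)
    -- `Ψ`, a `(0,p)`-good set with respect to `G_{Λ_ε}`
    {K : Type} [Fintype K] [Nonempty K]
    (ψ : K → (Fin d → ℝ) → ℝ) (hψm : ∀ k, Measurable (ψ k))
    (hψq : ∀ k, eLpNorm (ψ k) q (cubeMeasure d) ≠ ⊤)
    (hψ2 : ∀ k, eLpNorm (ψ k) 2 (cubeMeasure d) ≠ ⊤)
    (hψpos : ∀ k, 0 < Lnorm q (ψ k))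
    (hgood : ∀ lam ∈ Λε, ∀ nu ∈ Λε,
      FL lam ≠ FL nu →
      ∃ k, (∫ t, ψ k t * (FL lam t - FL nu t) ∂(cubeMeasure d)) =
        Lnorm p (fun t => FL lam t - FL nu t))
    -- the aggregation procedure
    {Ω : Type} [MeasurableSpace Ω] (P : Measure Ω) [IsProbabilityMeasure P]
    (δ : ℝ) (hδ0 : 0 < δ) (hδ1 : δ < 1)
    (Z : K → Ω → ℝ) (hZm : ∀ k, Measurable (Z k))
    (κ : ℝ) (hκpos : 0 < κ)
    (hκ : (P {ω | κ ≤ ⨆ k, |Z k ω| / Lnorm 2 (ψ k)}).toReal ≤ δ)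
    (M : (Fin N → ℝ) → Ω → ℝ)
    (hM : ∀ lam ω, M lam ω = ⨆ k,
      (|(∫ t, ψ k t * (f t - FL lam t) ∂(cubeMeasure d)) + ε * Z k ω|
          - ε * κ * Lnorm 2 (ψ k)) / Lnorm q (ψ k))
    (lamhat : Ω → Fin N → ℝ)
    (hmem : ∀ ω, lamhat ω ∈ simplex N)
    (hminM : ∀ ω, ∀ lam ∈ simplex N, M (lamhat ω) ω ≤ M lam ω)
    (hmeasE : Measurable fun ω => Lnorm p (fun t => FL (lamhat ω) t - f t)) :
    ∫ ω, Lnorm p (fun t => FL (lamhat ω) t - f t) ∂P ≤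
      (2 * (⨆ k, Lnorm q (ψ k)) + 1) *
          (⨅ lam : simplex N, Lnorm p (fun t => f t - FL lam.1 t))
        + 2 * κ * ε * (⨆ k, Lnorm 2 (ψ k))
        + 2 * L * ε * (1 + ⨆ k, Lnorm q (ψ k))
        + 2 * L * δ := by
  have mf : MemLp f p (cubeMeasure d) := ⟨hfm.aestronglyMeasurable, hfL.trans_lt ENNReal.ofReal_lt_top⟩
  have mF : ∀ i, MemLp (F i) p (cubeMeasure d) := fun i =>
    ⟨(hFm i).aestronglyMeasurable, (hFLb i).trans_lt ENNReal.ofReal_lt_top⟩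
  have mψ : ∀ k, MemLp (ψ k) q (cubeMeasure d) := fun k =>
    ⟨(hψm k).aestronglyMeasurable, (hψq k).lt_top⟩
  have hFL' : ∀ lam, FL lam = fun t => ∑ i, lam i * F i t := fun lam => funext (hFL lam)
  have mFL : ∀ lam, MemLp (FL lam) p (cubeMeasure d) := fun lam => by
    rw [hFL' lam]
    exact memLp_finsetSum _ fun i _ => (mF i).const_mul (lam i)
  have hlip : ∀ a b, Lnorm p (fun t => FL a t - FL b t) ≤ L * ∑ i, |a i - b i| := fun a b => by
    have h := aux_lin hp F mF L hL0 hFLb (fun i => a i - b i)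
    have e : (fun t => FL a t - FL b t) = fun t => ∑ i, (a i - b i) * F i t := by
      ext t
      rw [hFL, hFL, ← Finset.sum_sub_distrib]
      exact Finset.sum_congr rfl fun i _ => by ring
    rw [e]; exact h
  have hsymm : ∀ a b : (Fin d → ℝ) → ℝ, Lnorm p (fun t => a t - b t) = Lnorm p (fun t => b t - a t) :=
    fun a b => by
      unfold Lnorm
      rw [← eLpNorm_neg]
      congr 2
      ext t; simp
  have hFLL : ∀ lam ∈ simplex N, Lnorm p (FL lam) ≤ L := fun lam hl => by
    have h := aux_lin hp F mF L hL0 hFLb lam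
    rw [← hFL'] at h
    refine h.trans ?_
    have : ∑ i, |lam i| = ∑ i, lam i := Finset.sum_congr rfl fun i _ => abs_of_nonneg (hl.1 i)
    rw [this]
    nlinarith [hl.2]
  have hfL' : Lnorm p f ≤ L := ENNReal.toReal_le_of_le_ofReal hL0 hfL
  have hX2L : ∀ ω, Lnorm p (fun t => FL (lamhat ω) t - f t) ≤ 2 * L := fun ω => by
    have h := aux_tri hp (mFL (lamhat ω)) (MemLp.zero' (p := p) (μ := cubeMeasure d) (ε := ℝ)) mf
    have h1 := hFLL _ (hmem ω)
    have h2 : Lnorm p (fun t => (0:ℝ) - f t) = Lnorm p f := by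
      rw [hsymm (fun _ => (0:ℝ)) f]; simp
    have h3 : Lnorm p (fun t => FL (lamhat ω) t - 0) = Lnorm p (FL (lamhat ω)) := by simp
    rw [h2, h3] at h
    linarith
  have hψ2pos : ∀ k, 0 < Lnorm 2 (ψ k) := fun k => by
    refine ENNReal.toReal_pos (fun h0 => ?_) (hψ2 k)
    rw [eLpNorm_eq_zero_iff (hψm k).aestronglyMeasurable (by norm_num)] at h0
    have := hψpos k
    unfold Lnorm at this
    rw [eLpNorm_congr_ae h0] at this
    simp at this
  set Q := ⨆ k, Lnorm q (ψ k) with hQ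
  set T := ⨆ k, Lnorm 2 (ψ k) with hT
  have hQk : ∀ k, Lnorm q (ψ k) ≤ Q := fun k => le_ciSup (f := fun k => Lnorm q (ψ k)) (Finite.bddAbove_range _) k
  have hTk : ∀ k, Lnorm 2 (ψ k) ≤ T := fun k => le_ciSup (f := fun k => Lnorm 2 (ψ k)) (Finite.bddAbove_range _) k
  have hQ0 : 0 < Q := (hψpos (Classical.arbitrary K)).trans_le (hQk _)
  have hT0 : 0 < T := (hψ2pos (Classical.arbitrary K)).trans_le (hTk _)
  have hn0 : ∀ g : (Fin d → ℝ) → ℝ, 0 ≤ Lnorm p g := fun g => ENNReal.toReal_nonneg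
  -- pointwise bound on the good event
  have key : ∀ ω, (⨆ k, |Z k ω| / Lnorm 2 (ψ k)) < κ → ∀ ls ∈ simplex N,
      Lnorm p (fun t => FL (lamhat ω) t - f t) ≤
        (2 * Q + 1) * Lnorm p (fun t => f t - FL ls t) + 2 * κ * ε * T + 2 * L * ε * (1 + Q) := by
    intro ω hω ls hls
    have hZ : ∀ k, |Z k ω| ≤ κ * Lnorm 2 (ψ k) := fun k => by
      have h := (le_ciSup (f := fun k => |Z k ω| / Lnorm 2 (ψ k)) (Finite.bddAbove_range _) k).trans hω.le
      exact (div_le_iff₀ (hψ2pos k)).1 h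
    set B := Lnorm p (fun t => f t - FL ls t) with hB
    have hB0 : 0 ≤ B := hn0 _
    have hεZ : ∀ k, |ε * Z k ω| ≤ ε * κ * Lnorm 2 (ψ k) := fun k => by
      rw [abs_mul, abs_of_pos hε0, mul_assoc]
      exact mul_le_mul_of_nonneg_left (hZ k) hε0.le
    have hMls : M ls ω ≤ B := by
      rw [hM]
      refine ciSup_le fun k => ?_
      rw [div_le_iff₀ (hψpos k)]
      have h1 := (aux_holder hpq (mψ k) (mf.sub (mFL ls))).2
      simp only [Pi.sub_apply] at h1
      have h1' : |∫ t, ψ k t * (f t - FL ls t) ∂(cubeMeasure d)| ≤ Lnorm q (ψ k) * B := h1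
      have h2 := abs_add_le (∫ t, ψ k t * (f t - FL ls t) ∂(cubeMeasure d)) (ε * Z k ω)
      linarith [hεZ k]
    have hMhat : M (lamhat ω) ω ≤ B := (hminM ω ls hls).trans hMls
    have hhat : ∀ k, |∫ t, ψ k t * (f t - FL (lamhat ω) t) ∂(cubeMeasure d)| ≤
        Lnorm q (ψ k) * B + 2 * (ε * κ * Lnorm 2 (ψ k)) := fun k => by
      rw [hM] at hMhat
      have h1 := (le_ciSup (f := fun k =>
        (|(∫ t, ψ k t * (f t - FL (lamhat ω) t) ∂(cubeMeasure d)) + ε * Z k ω|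
          - ε * κ * Lnorm 2 (ψ k)) / Lnorm q (ψ k)) (Finite.bddAbove_range _) k).trans hMhat
      rw [div_le_iff₀ (hψpos k)] at h1
      have h2 := abs_sub (∫ t, ψ k t * (f t - FL (lamhat ω) t) ∂(cubeMeasure d) + ε * Z k ω) (ε * Z k ω)
      rw [add_sub_cancel_right] at h2
      linarith [hεZ k]
    obtain ⟨a, ha, hda⟩ := hnet _ (hmem ω)
    obtain ⟨b, hb, hdb⟩ := hnet _ hls
    have hA : Lnorm p (fun t => FL (lamhat ω) t - FL a t) ≤ L * ε :=
      (hlip _ _).trans (mul_le_mul_of_nonneg_left hda hL0)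
    have hBb : Lnorm p (fun t => FL ls t - FL b t) ≤ L * ε :=
      (hlip _ _).trans (mul_le_mul_of_nonneg_left hdb hL0)
    have t1 := aux_tri hp (mFL (lamhat ω)) (mFL a) mf
    have t2 := aux_tri hp (mFL a) (mFL b) mf
    have t3 := aux_tri hp (mFL b) (mFL ls) mf
    rw [hsymm (FL b) (FL ls), hsymm (FL ls) f] at t3
    have hg : Lnorm p (fun t => FL a t - FL b t) ≤
        2 * Q * B + 2 * κ * ε * T + 2 * L * ε * Q := by
      by_cases hab : FL a = FL b
      · rw [hab]
        have : Lnorm p (fun t => FL b t - FL b t) = 0 := by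
          unfold Lnorm; simp
        rw [this]; positivity
      · obtain ⟨k, hk⟩ := hgood a ha b hb hab
        rw [← hk]
        have i1 := aux_holder hpq (mψ k) ((mFL (lamhat ω)).sub (mFL a))
        have i2 := aux_holder hpq (mψ k) (mf.sub (mFL (lamhat ω)))
        have i3 := aux_holder hpq (mψ k) (mf.sub (mFL ls))
        have i4 := aux_holder hpq (mψ k) ((mFL ls).sub (mFL b))
        simp only [Pi.sub_apply] at i1 i2 i3 i4
        have e : (∫ t, ψ k t * (FL a t - FL b t) ∂(cubeMeasure d)) =
            (∫ t, ψ k t * (f t - FL ls t) ∂(cubeMeasure d))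
            + (∫ t, ψ k t * (FL ls t - FL b t) ∂(cubeMeasure d))
            - (∫ t, ψ k t * (FL (lamhat ω) t - FL a t) ∂(cubeMeasure d))
            - (∫ t, ψ k t * (f t - FL (lamhat ω) t) ∂(cubeMeasure d)) := by
          rw [← aux_int i3.1 i4.1 i1.1 i2.1]
          refine integral_congr_ae (Filter.Eventually.of_forall fun t => ?_)
          ring
        rw [e]
        have j1 : |∫ t, ψ k t * (FL (lamhat ω) t - FL a t) ∂(cubeMeasure d)| ≤
          Lnorm q (ψ k) * (L * ε) := i1.2.trans (mul_le_mul_of_nonneg_left hA (hψpos k).le)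
        have j3 : |∫ t, ψ k t * (f t - FL ls t) ∂(cubeMeasure d)| ≤ Lnorm q (ψ k) * B := i3.2
        have j4 : |∫ t, ψ k t * (FL ls t - FL b t) ∂(cubeMeasure d)| ≤
          Lnorm q (ψ k) * (L * ε) := i4.2.trans (mul_le_mul_of_nonneg_left hBb (hψpos k).le)
        have j2 := hhat k
        rw [abs_le] at j1 j2 j3 j4
        have q1 := mul_le_mul_of_nonneg_right (hQk k) hB0
        have q2 := mul_le_mul_of_nonneg_right (hQk k) (mul_nonneg hL0 hε0.le)
        have q3 := mul_le_mul_of_nonneg_left (hTk k) (mul_nonneg hε0.le hκpos.le)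
        linarith [j1.1, j2.1, j3.2, j4.2]
    linarith
  have : Nonempty (simplex N) := ⟨⟨0, by simp [simplex]⟩⟩
  set I := ⨅ lam : simplex N, Lnorm p (fun t => f t - FL lam.1 t) with hI
  have hI0 : 0 ≤ I := le_ciInf fun _ => hn0 _
  set C := (2 * Q + 1) * I + 2 * κ * ε * T + 2 * L * ε * (1 + Q) with hC
  have hC0 : 0 ≤ C := by positivity
  have hgoodC : ∀ ω, (⨆ k, |Z k ω| / Lnorm 2 (ψ k)) < κ →
      Lnorm p (fun t => FL (lamhat ω) t - f t) ≤ C := fun ω hω => by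
    have hpos : 0 < 2 * Q + 1 := by linarith
    have : (Lnorm p (fun t => FL (lamhat ω) t - f t) - 2 * κ * ε * T - 2 * L * ε * (1 + Q)) / (2 * Q + 1)
        ≤ I := le_ciInf fun l => by
      rw [div_le_iff₀ hpos]
      linarith [key ω hω l.1 l.2]
    rw [div_le_iff₀ hpos] at this
    linarith
  set S : Set Ω := {ω | κ ≤ ⨆ k, |Z k ω| / Lnorm 2 (ψ k)} with hS
  have hSm : MeasurableSet S :=
    measurableSet_le measurable_const
      (Measurable.iSup fun k => (continuous_abs.measurable.comp (hZm k)).div_const _)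
  have hint : Integrable (fun ω => C + S.indicator (fun _ => 2 * L) ω) P :=
    (integrable_const C).add ((integrable_const _).indicator hSm)
  have hle : ∫ ω, Lnorm p (fun t => FL (lamhat ω) t - f t) ∂P ≤
      ∫ ω, (C + S.indicator (fun _ => 2 * L) ω) ∂P := by
    refine integral_mono_of_nonneg (Filter.Eventually.of_forall fun ω => hn0 _) hint
      (Filter.Eventually.of_forall fun ω => ?_)
    by_cases hω : ω ∈ S
    · simp only [Set.indicator_of_mem hω]
      linarith [hX2L ω]
    · simp only [Set.indicator_of_notMem hω, add_zero]
      exact hgoodC ω (not_le.1 hω)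
  refine hle.trans ?_
  rw [integral_add (integrable_const C) ((integrable_const _).indicator hSm),
    integral_indicator_const _ hSm]
  simp only [integral_const, probReal_univ, smul_eq_mul]
  have : P.real S ≤ δ := hκ
  nlinarith
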